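/- Let ζ ∈ (0,π) and σ ∈ {0,1}. The Suzuki–Takahashi conditions for an 8-string, namely (−1)^σ · sin(kζ) · sin((8−k)ζ) > 0 for all k = 1, …, 7, hold if and only if σ = 0 and ζ ∈ (0, π/7) ∪ (π/3, 2π/5) ∪ (3π/5, 2π/3) ∪ (6π/7, π). In particular, they never hold with σ = 1. -/

import Mathlib

/-! Put `x = ζ / π`. Since `sin (xπ)` has the sign of `(-1) ^ ⌊x⌋` unless `x` is an integer, the
conditions say that no `kx` with `0 < k < r` is an integer and that all sums `⌊kx⌋ + ⌊(r - k)x⌋`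
have the parity of `σ`. Enclose `x` between consecutive terms `a / b < x < c / d` of the Farey
sequence of order `r - 1`, so that `b, d < r ≤ b + d`. If `b + d = r`, all the sums equal
`a + c - 1`. If `b + d > r`, the sum is `⌊rx⌋` for `k = b` but `⌊rx⌋ - 1` for `k = d`, so the
parities disagree. Hence `r`-strings live exactly in the gaps around the mediants `(a + c) / r`,
which for `r = 8` and `0 < x < 1` are `1/8`, `3/8`, `5/8` and `7/8`. -/

open scoped Real

/-- `a / b < x < c / d` for fractions with positive denominators and `c * b - a * d = 1`, that is,
for neighbours in a Farey sequence. The bounds on `x` are cleared of denominators. -/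
structure FareyNeighbors (x : ℝ) (a b c d : ℤ) : Prop where
  left_den_pos : 0 < b
  right_den_pos : 0 < d
  det_eq_one : c * b - a * d = 1
  lt_mul : a < b * x
  mul_lt : d * x < c

namespace FareyNeighbors

variable {x : ℝ} {a b c d k l n : ℤ}

theorem mul_left_den_le_or_mul_right_num_le (h : FareyNeighbors x a b c d) (hk : k < b + d)
    (n : ℤ) :
    n * b ≤ k * a ∨ k * c ≤ n * d := by
  have weighted_sum : (n * b - k * a) * d + (k * c - n * d) * b = k := by
    linear_combination k * h.det_eq_one
  by_contra! ⟨hleft, hright⟩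
  nlinarith [h.left_den_pos, h.right_den_pos]

theorem mul_left_den_le (h : FareyNeighbors x a b c d) (hk : 0 < k) (hkbd : k < b + d)
    (hn : n ≤ k * x) : n * b ≤ k * a := by
  refine (h.mul_left_den_le_or_mul_right_num_le hkbd n).resolve_right fun hright ↦ ?_
  have hkR : (0 : ℝ) < k := by exact_mod_cast hk
  have hdR : (0 : ℝ) < d := by exact_mod_cast h.right_den_pos
  have hrightR : (k : ℝ) * c ≤ n * d := by exact_mod_cast hright
  nlinarith [h.mul_lt]

theorem mul_right_num_le (h : FareyNeighbors x a b c d) (hk : 0 < k) (hkbd : k < b + d)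
    (hn : k * x ≤ n) : k * c ≤ n * d := by
  refine (h.mul_left_den_le_or_mul_right_num_le hkbd n).resolve_left fun hleft ↦ ?_
  have hkR : (0 : ℝ) < k := by exact_mod_cast hk
  have hbR : (0 : ℝ) < b := by exact_mod_cast h.left_den_pos
  have hleftR : (n : ℝ) * b ≤ k * a := by exact_mod_cast hleft
  nlinarith [h.lt_mul]

theorem mul_right_den_lt (h : FareyNeighbors x a b c d) (hk : 0 < k) (hn : n * b ≤ k * a) :
    n * d < k * c := by
  refine lt_of_mul_lt_mul_right ?_ h.left_den_pos.le
  calc n * d * b = n * b * d := by ring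
    _ ≤ k * a * d := mul_le_mul_of_nonneg_right hn h.right_den_pos.le
    _ < k * a * d + k := lt_add_of_pos_right _ hk
    _ = k * c * b := by linear_combination -k * h.det_eq_one

theorem fract_pos (h : FareyNeighbors x a b c d) (hk : 0 < k) (hkbd : k < b + d) :
    0 < Int.fract (k * x) := by
  refine Int.fract_pos.2 fun hint ↦ ?_
  have hleft := h.mul_left_den_le hk hkbd hint.ge
  have hright := h.mul_right_num_le hk hkbd hint.le
  exact (h.mul_right_den_lt hk hleft).not_ge hright

theorem floor_left (h : FareyNeighbors x a b c d) : ⌊b * x⌋ = a := by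
  refine Int.floor_eq_iff.2 ⟨h.lt_mul.le, lt_of_not_ge fun hle ↦ ?_⟩
  have := h.mul_left_den_le (n := a + 1) h.left_den_pos (by linarith [h.right_den_pos])
    (by exact_mod_cast hle)
  linarith [h.left_den_pos]

theorem floor_right (h : FareyNeighbors x a b c d) : ⌊d * x⌋ = c - 1 := by
  refine Int.floor_eq_iff.2 ⟨le_of_not_gt fun hlt ↦ ?_, by push_cast; linarith [h.mul_lt]⟩
  have := h.mul_right_num_le (n := c - 1) h.right_den_pos (by linarith [h.left_den_pos]) hlt.le
  linarith [h.right_den_pos]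

theorem floor_add_floor (h : FareyNeighbors x a b c d) (hk : 0 < k) (hl : 0 < l)
    (hkl : k + l = b + d) : ⌊k * x⌋ + ⌊l * x⌋ = a + c - 1 := by
  have lower_k := h.mul_left_den_le hk (by linarith) (Int.floor_le (k * x))
  have lower_l := h.mul_left_den_le hl (by linarith) (Int.floor_le (l * x))
  have upper_k := h.mul_right_num_le (n := ⌊k * x⌋ + 1) hk (by linarith)
    (by exact_mod_cast (Int.lt_floor_add_one (k * x)).le)
  have upper_l := h.mul_right_num_le (n := ⌊l * x⌋ + 1) hl (by linarith)
    (by exact_mod_cast (Int.lt_floor_add_one (l * x)).le)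
  obtain rfl : k = b + d - l := by linarith
  have sum_lt : ⌊(b + d - l : ℤ) * x⌋ + ⌊l * x⌋ < a + c :=
    lt_of_mul_lt_mul_right (by linarith [h.det_eq_one]) h.left_den_pos.le
  have lt_sum : a + c < ⌊(b + d - l : ℤ) * x⌋ + ⌊l * x⌋ + 2 :=
    lt_of_mul_lt_mul_right (by linarith [h.det_eq_one]) h.right_den_pos.le
  linarith

theorem floor_left_add (h : FareyNeighbors x a b c d) (hl : 0 < l) (hld : l < d) :
    ⌊(b + l : ℤ) * x⌋ = a + ⌊l * x⌋ := by
  rw [Int.floor_eq_iff]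
  push_cast
  refine ⟨by linarith [h.lt_mul, Int.floor_le (l * x)], lt_of_not_ge fun hle ↦ ?_⟩
  have hleft := h.mul_left_den_le (k := b + l) (n := a + ⌊l * x⌋ + 1)
    (by linarith [h.left_den_pos]) (by linarith) (by push_cast; linarith)
  have hright := h.mul_right_num_le (n := ⌊l * x⌋ + 1) hl (by linarith [h.left_den_pos])
    (by exact_mod_cast (Int.lt_floor_add_one (l * x)).le)
  exact (h.mul_right_den_lt hl (by linarith)).not_ge hright

theorem floor_right_add (h : FareyNeighbors x a b c d) (hl : 0 < l) (hlb : l < b) :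
    ⌊(d + l : ℤ) * x⌋ = c + ⌊l * x⌋ := by
  rw [Int.floor_eq_iff]
  push_cast
  refine ⟨le_of_not_gt fun hlt ↦ ?_, by linarith [h.mul_lt, Int.lt_floor_add_one (l * x)]⟩
  have hleft := h.mul_left_den_le hl (by linarith [h.right_den_pos]) (Int.floor_le (l * x))
  have hright := h.mul_right_num_le (k := d + l) (n := c + ⌊l * x⌋)
    (by linarith [h.right_den_pos]) (by linarith) (by push_cast; exact hlt.le)
  exact (h.mul_right_den_lt hl hleft).not_ge (by linarith)

end FareyNeighbors

theorem exists_fareyNeighbors {x : ℝ} {n : ℕ} (hn : 1 ≤ n)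
    (hx : ∀ k : ℤ, 0 < k → k ≤ n → 0 < Int.fract (k * x)) :
    ∃ a b c d : ℤ, FareyNeighbors x a b c d ∧ b ≤ n ∧ d ≤ n ∧ n < b + d := by
  induction n, hn using Nat.le_induction with
  | base =>
    have hfract : 0 < Int.fract x := by simpa using hx 1 one_pos le_rfl
    refine ⟨⌊x⌋, 1, ⌊x⌋ + 1, 1, ⟨one_pos, one_pos, by ring, ?_, ?_⟩, by simp, by simp, by simp⟩
    · simpa only [Int.cast_one, one_mul] using sub_pos.1 hfract
    · simp
  | succ n hn ih =>
    obtain ⟨a, b, c, d, h, hb, hd, hbd⟩ := ih fun k hk hkn ↦ hx k hk (by push_cast; linarith)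
    have := h.left_den_pos
    have := h.right_den_pos
    have := h.det_eq_one
    push_cast
    rcases (Int.add_one_le_of_lt hbd).lt_or_eq with hlt | heq
    · exact ⟨a, b, c, d, h, by linarith, by linarith, hlt⟩
    have hmediant : (b + d : ℤ) * x ≠ (a + c : ℤ) := fun hint ↦ by
      have hfract := hx (b + d) (by linarith) (by push_cast; linarith)
      rw [hint, Int.fract_intCast] at hfract
      exact hfract.false
    rcases hmediant.lt_or_gt with hlt | hgt
    · exact ⟨a, b, a + c, b + d, ⟨h.left_den_pos, by linarith, by linarith, h.lt_mul, hlt⟩,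
        by linarith, by linarith, by linarith⟩
    · exact ⟨a + c, b + d, c, d, ⟨by linarith, h.right_den_pos, by linarith, hgt, h.mul_lt⟩,
        by linarith, by linarith, by linarith⟩

theorem sin_mul_pi_eq_neg_one_zpow_floor_mul (x : ℝ) :
    Real.sin (x * π) = (-1) ^ ⌊x⌋ * Real.sin (Int.fract x * π) := by
  rw [← Real.sin_add_int_mul_pi, ← add_mul, Int.fract_add_floor]

theorem sin_fract_mul_pi_nonneg (x : ℝ) : 0 ≤ Real.sin (Int.fract x * π) :=
  Real.sin_nonneg_of_nonneg_of_le_pi (by have := Int.fract_nonneg x; positivity)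
    (mul_le_of_le_one_left Real.pi_pos.le (Int.fract_lt_one x).le)

theorem sin_fract_mul_pi_pos_iff {x : ℝ} :
    0 < Real.sin (Int.fract x * π) ↔ 0 < Int.fract x := by
  refine ⟨fun hsin ↦ (Int.fract_nonneg x).lt_of_ne fun hzero ↦ ?_, fun hx ↦ ?_⟩
  · simp [← hzero] at hsin
  · exact Real.sin_pos_of_pos_of_lt_pi (by positivity)
      (mul_lt_of_lt_one_left Real.pi_pos (Int.fract_lt_one x))

theorem neg_one_zpow_mul_pos_iff {n : ℤ} {y : ℝ} (hy : 0 ≤ y) :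
    0 < (-1 : ℝ) ^ n * y ↔ 0 < y ∧ Even n := by
  rcases Int.even_or_odd n with heven | hodd
  · simp [heven.neg_one_zpow, heven]
  · simp [hodd.neg_one_zpow, Int.not_even_iff_odd.2 hodd, hy]

theorem neg_one_pow_mul_sin_mul_sin_pos_iff (σ : ℕ) (x y : ℝ) :
    0 < (-1 : ℝ) ^ σ * Real.sin (x * π) * Real.sin (y * π) ↔
      (0 < Int.fract x ∧ 0 < Int.fract y) ∧ Even (σ + ⌊x⌋ + ⌊y⌋) := by
  have hx := sin_fract_mul_pi_nonneg x
  have hy := sin_fract_mul_pi_nonneg y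
  have collect_signs : (-1 : ℝ) ^ σ * Real.sin (x * π) * Real.sin (y * π) =
      (-1) ^ (σ + ⌊x⌋ + ⌊y⌋) * (Real.sin (Int.fract x * π) * Real.sin (Int.fract y * π)) := by
    rw [sin_mul_pi_eq_neg_one_zpow_floor_mul x, sin_mul_pi_eq_neg_one_zpow_floor_mul y,
      zpow_add₀ (by norm_num), zpow_add₀ (by norm_num), zpow_natCast]
    ring
  rw [collect_signs, neg_one_zpow_mul_pos_iff (mul_nonneg hx hy), ← sin_fract_mul_pi_pos_iff,
    ← sin_fract_mul_pi_pos_iff]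
  refine and_congr_left' ⟨fun h ↦ ⟨?_, ?_⟩, fun h ↦ mul_pos h.1 h.2⟩
  · exact pos_of_mul_pos_left h hy
  · exact pos_of_mul_pos_right h hx

/-- The Suzuki–Takahashi conditions for the existence of an `r`-string of parity `σ` in the XXZ
chain with anisotropy `cos ζ`. -/
def SuzukiTakahashi (r σ : ℕ) (ζ : ℝ) : Prop :=
  ∀ k : ℕ, 1 ≤ k → k < r →
    0 < (-1 : ℝ) ^ σ * Real.sin ((k : ℝ) * ζ) * Real.sin ((r - (k : ℝ)) * ζ)

theorem suzukiTakahashi_iff_floor {r σ : ℕ} {ζ : ℝ} :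
    SuzukiTakahashi r σ ζ ↔ ∀ k l : ℤ, 0 < k → 0 < l → k + l = r →
      0 < Int.fract (k * (ζ / π)) ∧ Even (σ + ⌊k * (ζ / π)⌋ + ⌊l * (ζ / π)⌋) := by
  obtain ⟨x, rfl⟩ : ∃ x, ζ = x * π := ⟨ζ / π, (div_mul_cancel₀ ζ Real.pi_ne_zero).symm⟩
  simp only [SuzukiTakahashi, mul_div_cancel_right₀ x Real.pi_ne_zero, ← mul_assoc,
    neg_one_pow_mul_sin_mul_sin_pos_iff]
  refine ⟨fun h k l hk hl hkl ↦ ?_, fun h k hk hkr ↦ ?_⟩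
  · lift k to ℕ using hk.le
    have hcast : (l : ℝ) = r - k := by exact_mod_cast eq_sub_of_add_eq' hkl
    have := h k (by lia) (by lia)
    rw [Int.cast_natCast, hcast]
    exact ⟨this.1.1, this.2⟩
  · have hkl := h k (r - k) (by lia) (by lia) (by lia)
    have hlk := h (r - k) k (by lia) (by lia) (by lia)
    push_cast at hkl hlk
    exact ⟨⟨hkl.1, hlk.1⟩, hkl.2⟩

theorem suzukiTakahashi_iff_fareyNeighbors {r σ : ℕ} {ζ : ℝ} (hr : 2 ≤ r) :
    SuzukiTakahashi r σ ζ ↔ ∃ a b c d : ℤ,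
      FareyNeighbors (ζ / π) a b c d ∧ b + d = r ∧ Even (σ + (a + c - 1)) := by
  rw [suzukiTakahashi_iff_floor]
  constructor
  · intro h
    obtain ⟨a, b, c, d, hgap, hb, hd, hbd⟩ := exists_fareyNeighbors (n := r - 1) (by lia)
      fun k hk hkr ↦ (h k (r - k) hk (by lia) (by lia)).1
    have hb_pos := hgap.left_den_pos
    have hd_pos := hgap.right_den_pos
    have hr_le : r ≤ b + d := by lia
    rcases hr_le.eq_or_lt with heq | hlt
    · refine ⟨a, b, c, d, hgap, heq.symm, ?_⟩
      rw [← hgap.floor_add_floor hb_pos hd_pos rfl, ← add_assoc]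
      exact (h b d hb_pos hd_pos heq.symm).2
    · have even_left := (h b (r - b) hb_pos (by lia) (by lia)).2
      have even_right := (h d (r - d) hd_pos (by lia) (by lia)).2
      have floor_left := hgap.floor_left_add (l := r - b) (by lia) (by lia)
      have floor_right := hgap.floor_right_add (l := r - d) (by lia) (by lia)
      rw [add_sub_cancel] at floor_left floor_right
      have same_floor := floor_left.symm.trans floor_right
      rw [hgap.floor_left] at even_left
      rw [hgap.floor_right] at even_right
      grind
  · rintro ⟨a, b, c, d, hgap, hbd, hparity⟩ k l hk hl hkl
    refine ⟨hgap.fract_pos hk (by lia), ?_⟩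
    rwa [add_assoc, hgap.floor_add_floor hk hl (by lia)]

theorem fareyNeighbors_div_pi_iff {a b c d : ℤ} {ζ : ℝ} (hb : 0 < b) (hd : 0 < d)
    (hdet : c * b - a * d = 1) :
    FareyNeighbors (ζ / π) a b c d ↔ ζ ∈ Set.Ioo (a * π / b) (c * π / d) := by
  have hbR : (0 : ℝ) < b := by exact_mod_cast hb
  have hdR : (0 : ℝ) < d := by exact_mod_cast hd
  have hleft : a < b * (ζ / π) ↔ a * π / b < ζ := by
    rw [div_lt_iff₀ hbR, ← mul_div_assoc, lt_div_iff₀ Real.pi_pos, mul_comm ζ]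
  have hright : d * (ζ / π) < c ↔ ζ < c * π / d := by
    rw [lt_div_iff₀ hdR, ← mul_div_assoc, div_lt_iff₀ Real.pi_pos, mul_comm ζ]
  exact ⟨fun h ↦ ⟨hleft.1 h.lt_mul, hright.1 h.mul_lt⟩,
    fun h ↦ ⟨hb, hd, hdet, hleft.2 h.1, hright.2 h.2⟩⟩

theorem FareyNeighbors.eq_of_den_add_den_eq_eight {x : ℝ} {a b c d : ℤ}
    (h : FareyNeighbors x a b c d) (hx : x ∈ Set.Ioo 0 1) (hbd : b + d = 8) :
    (a = 0 ∧ b = 1 ∧ c = 1 ∧ d = 7) ∨ (a = 1 ∧ b = 3 ∧ c = 2 ∧ d = 5) ∨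
      (a = 3 ∧ b = 5 ∧ c = 2 ∧ d = 3) ∨ (a = 6 ∧ b = 7 ∧ c = 1 ∧ d = 1) := by
  have hb := h.left_den_pos
  have hd := h.right_den_pos
  have hdet := h.det_eq_one
  have hbR : (0 : ℝ) < b := by exact_mod_cast hb
  have hdR : (0 : ℝ) < d := by exact_mod_cast hd
  have left_num_lt_den : a < b := by
    exact_mod_cast h.lt_mul.trans (mul_lt_of_lt_one_right hbR hx.2)
  have right_num_pos : 0 < c := by exact_mod_cast (mul_pos hdR hx.1).trans h.mul_lt
  have hb8 : b < 8 := by linarith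
  obtain rfl : d = 8 - b := by linarith
  interval_cases b <;> omega

theorem suzukiTakahashi_eight_iff {σ : ℕ} {ζ : ℝ} (hζ : ζ ∈ Set.Ioo 0 π) :
    SuzukiTakahashi 8 σ ζ ↔
      Even σ ∧ ζ ∈ Set.Ioo 0 (π / 7) ∪ Set.Ioo (π / 3) (2 * π / 5) ∪
        Set.Ioo (3 * π / 5) (2 * π / 3) ∪ Set.Ioo (6 * π / 7) π := by
  have hx : ζ / π ∈ Set.Ioo 0 1 := ⟨div_pos hζ.1 Real.pi_pos, (div_lt_one Real.pi_pos).2 hζ.2⟩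
  have gap_one_eighth : FareyNeighbors (ζ / π) 0 1 1 7 ↔ ζ ∈ Set.Ioo 0 (π / 7) := by
    simpa using fareyNeighbors_div_pi_iff (a := 0) (b := 1) (c := 1) (d := 7) (ζ := ζ)
  have gap_three_eighths : FareyNeighbors (ζ / π) 1 3 2 5 ↔ ζ ∈ Set.Ioo (π / 3) (2 * π / 5) := by
    simpa using fareyNeighbors_div_pi_iff (a := 1) (b := 3) (c := 2) (d := 5) (ζ := ζ)
  have gap_five_eighths : FareyNeighbors (ζ / π) 3 5 2 3 ↔ ζ ∈ Set.Ioo (3 * π / 5) (2 * π / 3) := by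
    simpa using fareyNeighbors_div_pi_iff (a := 3) (b := 5) (c := 2) (d := 3) (ζ := ζ)
  have gap_seven_eighths : FareyNeighbors (ζ / π) 6 7 1 1 ↔ ζ ∈ Set.Ioo (6 * π / 7) π := by
    simpa using fareyNeighbors_div_pi_iff (a := 6) (b := 7) (c := 1) (d := 1) (ζ := ζ)
  rw [suzukiTakahashi_iff_fareyNeighbors (by norm_num), Set.mem_union, Set.mem_union,
    Set.mem_union, ← gap_one_eighth, ← gap_three_eighths, ← gap_five_eighths,
    ← gap_seven_eighths]
  constructor
  · rintro ⟨a, b, c, d, hgap, hbd, hparity⟩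
    rcases hgap.eq_of_den_add_den_eq_eight hx hbd with
      ⟨rfl, rfl, rfl, rfl⟩ | ⟨rfl, rfl, rfl, rfl⟩ | ⟨rfl, rfl, rfl, rfl⟩ | ⟨rfl, rfl, rfl, rfl⟩
    all_goals exact ⟨by grind, by simp only [hgap, true_or, or_true]⟩
  · rintro ⟨heven, ((hgap | hgap) | hgap) | hgap⟩
    all_goals exact ⟨_, _, _, _, hgap, by norm_num, by grind⟩

/-- Suzuki–Takahashi conditions for an 8-string: `(-1)^σ·sin(kζ)·sin((8-k)ζ) > 0`
for `k = 1,…,7` holds iff `σ = 0` and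
`ζ ∈ (0, π/7) ∪ (π/3, 2π/5) ∪ (3π/5, 2π/3) ∪ (6π/7, π)`. -/
theorem suzuki_takahashi_eight_string (ζ : ℝ) (hζ : ζ ∈ Set.Ioo 0 Real.pi)
    (σ : ℕ) (hσ : σ = 0 ∨ σ = 1) :
    (∀ k : ℕ, 1 ≤ k → k ≤ 7 →
        0 < (-1 : ℝ) ^ σ * Real.sin ((k : ℝ) * ζ) * Real.sin ((8 - (k : ℝ)) * ζ)) ↔
      σ = 0 ∧ ζ ∈ Set.Ioo 0 (Real.pi / 7) ∪ Set.Ioo (Real.pi / 3) (2 * Real.pi / 5) ∪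
        Set.Ioo (3 * Real.pi / 5) (2 * Real.pi / 3) ∪
        Set.Ioo (6 * Real.pi / 7) Real.pi := by
  have zero_iff_even : σ = 0 ↔ Even σ := by
    rcases hσ with rfl | rfl <;> simp
  rw [zero_iff_even, ← suzukiTakahashi_eight_iff hζ]
  simp only [SuzukiTakahashi, Nat.lt_succ_iff, Nat.cast_ofNat]
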